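/- Suppose |S(X,P)| ≥ 3. Then the rank of the group S(X,P) equals max{2, 2p+q+g(t)}. -/

import Mathlib

open Function Set

/-- The group `S(X,P)` of permutations of `X` preserving the partition induced by
the equivalence relation `r`, as a subgroup of `Equiv.Perm X`. -/
def SGrp {X : Type*} (r : Setoid X) : Subgroup (Equiv.Perm X) where
  carrier := {g | ∀ x y : X, r (g x) (g y) ↔ r x y}
  one_mem' := by intro x y; simp
  mul_mem' := by
    intro a b ha hb x y
    simp only [Equiv.Perm.mul_apply]
    rw [ha, hb]
  inv_mem' := by
    intro a ha x y
    have h := ha (a⁻¹ x) (a⁻¹ y)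
    simpa using h.symm

/-- The number of blocks of the partition having size `s`. -/
noncomputable def blockCount {X : Type*} (r : Setoid X) (s : ℕ) : ℕ :=
  {B | B ∈ Setoid.classes r ∧ B.ncard = s}.ncard

/-- The rank of a group: the least cardinality of a generating subset. -/
noncomputable def grank (G : Type*) [Group G] : ℕ :=
  sInf {k | ∃ S : Set G, S.Finite ∧ S.ncard = k ∧ Subgroup.closure S = ⊤}

/-- `g(0) = g(1) = 0` and `g(t) = 1` for `t ≥ 2`. -/
def gg (t : ℕ) : ℕ := if 2 ≤ t then 1 else 0

/-!
Collecting the blocks of equal size identifies `S(X,P)` with a product, over the block sizes `s`,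
of wreath products `Sym(s) ≀ Sym(m)`, where `m` is the number of blocks of size `s`. The signs of
the top permutation and of the product of the base permutations map it onto an elementary abelian
2-group of rank `2p + q + g(t)`, so at least that many generators are needed. It cannot be cyclic
either, since a commutative `S(X,P)` has exponent dividing 2.

For the upper bound, each nontrivial factor is generated by an element of order dividing 2, an
element of odd order and at most one more element. Two commuting elements of coprime orders are
powers of their product, so going cyclically around the factors one merges the involution of each
factor with the odd-order element of the next. A single factor with `s, m ≥ 2` needs only two
generators, a transposition of the top times a diagonal element of odd order, and the long cycle of
the top times a transposition in one coordinate of the base.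
-/

open Equiv

theorem grank_eq_rank (G : Type*) [Group G] [Group.FG G] : grank G = Group.rank G := by
  obtain ⟨S, hScard, hS⟩ := Group.rank_spec G
  refine le_antisymm (Nat.sInf_le ⟨S, S.finite_toSet, ?_, hS⟩)
    (le_csInf ⟨_, S, S.finite_toSet, rfl, hS⟩ ?_)
  · rw [Set.ncard_coe_finset, hScard]
  · rintro _ ⟨T, hT, rfl, hgen⟩
    rw [Set.ncard_eq_toFinset_card T hT]
    exact Group.rank_le (by rwa [hT.coe_toFinset])

section Rank

variable {G : Type*} [Group G]

theorem rank_le_card_of_closure_range_eq_top [Group.FG G] {J : Type*} [Fintype J] {g : J → G}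
    (hg : Subgroup.closure (Set.range g) = ⊤) : Group.rank G ≤ Fintype.card J := by
  classical
  exact (Group.rank_le (S := Finset.univ.image g) (by simpa using hg)).trans Finset.card_image_le

theorem rank_le_two_of_closure_pair_eq_top [Group.FG G] {a b : G}
    (h : Subgroup.closure {a, b} = ⊤) : Group.rank G ≤ 2 := by
  classical
  exact (Group.rank_le (S := {a, b}) (by simpa using h)).trans Finset.card_le_two

theorem isCyclic_of_rank_le_one [Group.FG G] (h : Group.rank G ≤ 1) : IsCyclic G := by
  obtain ⟨S, hScard, hS⟩ := Group.rank_spec G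
  obtain ⟨g, hSg⟩ := Finset.card_le_one_iff_subset_singleton.1 (hScard.trans_le h)
  refine isCyclic_iff_exists_zpowers_eq_top.2 ⟨g, top_le_iff.1 ?_⟩
  rw [← hS, Subgroup.zpowers_eq_closure]
  exact Subgroup.closure_mono (by exact_mod_cast hSg)

theorem pi_sq_eq_one_of_commute {I : Type*} {G : I → Type*} [∀ i, Group (G i)]
    (h : ∀ i, (∀ x y : G i, Commute x y) → ∀ g : G i, g ^ 2 = 1)
    (hcomm : ∀ x y : ∀ i, G i, Commute x y) (g : ∀ i, G i) : g ^ 2 = 1 := by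
  classical
  refine funext fun i => h i (fun x y => ?_) (g i)
  simpa using (hcomm (Pi.mulSingle i x) (Pi.mulSingle i y)).map (Pi.evalMonoidHom G i)

theorem two_le_rank [Finite G] (hsq : (∀ x y : G, Commute x y) → ∀ g : G, g ^ 2 = 1)
    (hcard : 3 ≤ Nat.card G) : 2 ≤ Group.rank G := by
  by_contra! hrank
  have := isCyclic_of_rank_le_one (G := G) (by omega)
  obtain ⟨g, hg⟩ := IsCyclic.exists_generator (α := G)
  have hdvd : Nat.card G ∣ 2 := by
    rw [← orderOf_eq_card_of_forall_mem_zpowers hg]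
    exact orderOf_dvd_of_pow_eq_one (hsq (fun x y => IsMulCommutative.is_comm.comm x y) g)
  have := Nat.le_of_dvd two_pos hdvd
  omega

theorem le_rank_of_surjective_of_sq_eq_one [Finite G] {A : Type*} [CommGroup A] [Finite A] {d : ℕ}
    (hA : ∀ a : A, a ^ 2 = 1) (hcard : Nat.card A = 2 ^ d) {φ : G →* A}
    (hφ : Function.Surjective φ) : d ≤ Group.rank G := by
  have hdvd : 2 ^ d ∣ 2 ^ Group.rank A := hcard ▸ card_dvd_exponent_pow_rank' A hA
  exact (Nat.pow_dvd_pow_iff_le_right one_lt_two).1 hdvd |>.trans (Group.rank_le_of_surjective φ hφ)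

theorem rank_pi_le_rank_pi_nontrivial {I : Type*} [Finite I] (G : I → Type*) [∀ i, Group (G i)]
    [∀ i, Finite (G i)] :
    Group.rank (∀ i, G i) ≤ Group.rank (∀ i : {i // Nontrivial (G i)}, G i) := by
  classical
  let extend : (∀ i : {i // Nontrivial (G i)}, G i) →* ∀ i, G i :=
    { toFun := fun f i => if h : Nontrivial (G i) then f ⟨i, h⟩ else 1
      map_one' := by ext i; simp
      map_mul' := fun f g => by ext i; by_cases h : Nontrivial (G i) <;> simp [h] }
  refine Group.rank_le_of_surjective extend fun f => ⟨fun i => f i, funext fun i => ?_⟩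
  by_cases h : Nontrivial (G i)
  · exact dif_pos h
  · have := not_nontrivial_iff_subsingleton.1 h
    exact Subsingleton.elim _ _

end Rank

section SplitGenerators

theorem mem_and_mem_of_mul_mem {G : Type*} [Group G] {H : Subgroup G} {a b : G} (hab : Commute a b)
    (ha : a ^ 2 = 1) (hb : Odd (orderOf b)) (h : a * b ∈ H) : a ∈ H ∧ b ∈ H := by
  have hpow : (a * b) ^ orderOf b = a := by
    obtain ⟨k, hk⟩ := hb
    rw [hab.mul_pow, pow_orderOf_eq_one, mul_one, hk, pow_succ, pow_mul, ha, one_pow, one_mul]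
  have haH : a ∈ H := hpow ▸ H.pow_mem h _
  exact ⟨haH, (H.mul_mem_cancel_left haH).1 h⟩

theorem odd_orderOf_map {G H : Type*} [Group G] [Group H] (φ : G →* H) {b : G}
    (hb : Odd (orderOf b)) : Odd (orderOf (φ b)) :=
  hb.of_dvd_nat (orderOf_map_dvd φ b)

theorem map_mem_of_closure_eq_top {G H : Type*} [Group G] [Group H] {s : Set G}
    (hs : Subgroup.closure s = ⊤) (φ : G →* H) {K : Subgroup H} (h : ∀ x ∈ s, φ x ∈ K) (g : G) :
    φ g ∈ K := by
  have hle : Subgroup.closure s ≤ K.comap φ := (Subgroup.closure_le _).2 h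
  exact hle (hs ▸ Subgroup.mem_top g)

/-- The group `G` is generated by an element of order dividing two, an element of odd order and
`k` further elements. The first two can be merged, across commuting copies of such groups, into a
single generator. -/
def HasSplitGenerators (G : Type*) [Group G] (k : ℕ) : Prop :=
  ∃ (a b : G) (c : Fin k → G), a ^ 2 = 1 ∧ Odd (orderOf b) ∧
    Subgroup.closure (insert a (insert b (Set.range c))) = ⊤

namespace HasSplitGenerators

variable {G H : Type*} [Group G] [Group H]

theorem of_surjective {k : ℕ} (h : HasSplitGenerators G k) {φ : G →* H}
    (hφ : Function.Surjective φ) : HasSplitGenerators H k := by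
  obtain ⟨a, b, c, ha, hb, hgen⟩ := h
  refine ⟨φ a, φ b, φ ∘ c, by rw [← map_pow, ha, map_one], odd_orderOf_map φ hb, ?_⟩
  rw [Set.range_comp, ← Set.image_insert_eq, ← Set.image_insert_eq, ← MonoidHom.map_closure, hgen,
    Subgroup.map_top_of_surjective φ hφ]

theorem rank_le_two [Group.FG G] (h : HasSplitGenerators G 0) : Group.rank G ≤ 2 := by
  obtain ⟨a, b, c, -, -, hgen⟩ := h
  exact rank_le_two_of_closure_pair_eq_top (by simpa [Set.range_eq_empty] using hgen)

/-- Along a fixed-point-free permutation `σ` of the indices, the products `a i * b (σ i)` generate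
all `a i` and `b i`, because the two factors commute and have coprime orders. -/
theorem rank_pi_le {I : Type*} [Fintype I] [Nontrivial I] {G : I → Type*} [∀ i, Group (G i)]
    [∀ i, Finite (G i)] {k : I → ℕ} (h : ∀ i, HasSplitGenerators (G i) (k i)) :
    Group.rank (∀ i, G i) ≤ ∑ i, (k i + 1) := by
  classical
  choose a b c ha hb hgen using h
  obtain ⟨σ, hσ, -⟩ := Finset.exists_cycleOn (Finset.univ : Finset I)
  have hσne (i : I) : σ i ≠ i :=
    hσ.apply_ne (by simpa using Set.nontrivial_univ) (Finset.mem_coe.2 (Finset.mem_univ i))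
  let ins (i : I) : G i →* ∀ i, G i := MonoidHom.mulSingle G i
  let gen : I ⊕ (Σ i, Fin (k i)) → ∀ i, G i :=
    Sum.elim (fun i => ins i (a i) * ins (σ i) (b (σ i))) fun x => ins x.1 (c x.1 x.2)
  have hab (i : I) : ins i (a i) ∈ Subgroup.closure (Set.range gen) ∧
      ins (σ i) (b (σ i)) ∈ Subgroup.closure (Set.range gen) :=
    mem_and_mem_of_mul_mem (Pi.mulSingle_commute (hσne i).symm _ _)
      (by rw [← map_pow, ha, map_one]) (odd_orderOf_map _ (hb _))
      (Subgroup.subset_closure ⟨Sum.inl i, rfl⟩)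
  have htop : Subgroup.closure (Set.range gen) = ⊤ := by
    refine top_le_iff.1 fun f _ => Subgroup.pi_mem_of_mulSingle_mem f fun i => ?_
    refine map_mem_of_closure_eq_top (hgen i) (ins i) ?_ (f i)
    rintro x (rfl | rfl | ⟨j, rfl⟩)
    · exact (hab i).1
    · obtain ⟨j, rfl⟩ := σ.surjective i
      exact (hab j).2
    · exact Subgroup.subset_closure ⟨Sum.inr ⟨i, j⟩, rfl⟩
  refine (rank_le_card_of_closure_range_eq_top htop).trans_eq ?_
  simp [Finset.sum_add_distrib, add_comm]

theorem rank_pi_le_max {I : Type*} [Fintype I] {G : I → Type*} [∀ i, Group (G i)]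
    [∀ i, Finite (G i)] {d : I → ℕ} (hrank : ∀ i, Group.rank (G i) ≤ 2)
    (hsplit : ∀ i, Nontrivial (G i) → ∃ k, k + 1 = d i ∧ HasSplitGenerators (G i) k) :
    Group.rank (∀ i, G i) ≤ max 2 (∑ i, d i) := by
  classical
  let J := {i // Nontrivial (G i)}
  refine (rank_pi_le_rank_pi_nontrivial G).trans ?_
  rcases subsingleton_or_nontrivial J with _ | _
  · refine le_max_of_le_left ?_
    rcases isEmpty_or_nonempty J with _ | ⟨⟨j⟩⟩
    · exact (Group.rank_eq_zero _).trans_le zero_le_two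
    · have := uniqueOfSubsingleton j
      exact (Group.rank_congr (MulEquiv.piUnique fun i : J => G i)).trans_le (hrank _)
  · refine le_max_of_le_right ?_
    choose k hk hgen using fun j : J => hsplit j j.2
    calc Group.rank (∀ j : J, G j) ≤ ∑ j, (k j + 1) := rank_pi_le hgen
      _ = ∑ j : J, d j := Finset.sum_congr rfl fun j _ => hk j
      _ ≤ ∑ i, d i :=
        le_self_add.trans_eq (Fintype.sum_subtype_add_sum_subtype (fun i => Nontrivial (G i)) d)

end HasSplitGenerators

end SplitGenerators

section SymmetricGroup

theorem sq_eq_one_of_isSwap {α : Type*} [DecidableEq α] {σ : Perm α} (h : σ.IsSwap) :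
    σ ^ 2 = 1 := by
  obtain ⟨x, y, -, rfl⟩ := h
  rw [sq, swap_mul_self]

theorem normalClosure_eq_top_of_isSwap {α : Type*} [Finite α] [DecidableEq α] {σ : Perm α}
    (hσ : σ.IsSwap) : Subgroup.normalClosure {σ} = ⊤ := by
  obtain ⟨x, y, hxy, rfl⟩ := hσ
  rw [← top_le_iff, ← Perm.closure_isSwap, Subgroup.closure_le]
  rintro _ ⟨u, v, huv, rfl⟩
  exact Subgroup.conjugatesOfSet_subset_normalClosure
    (Group.mem_conjugatesOfSet_iff.2 ⟨_, rfl, Perm.isConj_swap hxy huv⟩)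

theorem perm_sq_eq_one_of_commute {α : Type*} (h : ∀ σ τ : Perm α, Commute σ τ) (σ : Perm α) :
    σ ^ 2 = 1 := by
  classical
  ext x
  have hswap : swap (σ x) (σ (σ x)) = swap x (σ x) := by
    rw [swap_apply_apply, (h σ _).eq, mul_inv_cancel_right]
  simpa [sq] using congrArg (· (σ x)) hswap

theorem exists_isCycle_support_eq_univ (α : Type*) [Fintype α] [DecidableEq α] [Nontrivial α] :
    ∃ σ : Perm α, σ.IsCycle ∧ σ.support = Finset.univ := by
  obtain ⟨σ, hσ, -⟩ := Finset.exists_cycleOn (Finset.univ : Finset α)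
  rw [Finset.coe_univ] at hσ
  refine ⟨σ, Perm.isCycle_iff_exists_isCycleOn.2 ⟨_, Set.nontrivial_univ, hσ, by simp⟩, ?_⟩
  exact Finset.eq_univ_of_forall fun x =>
    Perm.mem_support.2 (hσ.apply_ne Set.nontrivial_univ (Set.mem_univ x))

theorem orderOf_swap_mul_of_isCycle {α : Type*} [Fintype α] [DecidableEq α] {σ : Perm α}
    (hσ : σ.IsCycle) {x : α} (hx : σ x ≠ x) :
    orderOf (swap x (σ x) * σ) = σ.support.card - 1 := by
  by_cases hx2 : σ (σ x) = x
  · have hσ_swap : σ = swap x (σ x) := hσ.eq_swap_of_apply_apply_eq_self hx hx2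
    have hcard : σ.support.card = 2 := hσ_swap ▸ Perm.card_support_swap hx.symm
    rw [← hσ_swap, ← sq, sq_eq_one_of_isSwap ⟨x, σ x, hx.symm, hσ_swap⟩, orderOf_one, hcard]
  · rw [(hσ.swap_mul hx hx2).orderOf, Perm.support_swap_mul_eq _ _ hx2,
      Finset.card_sdiff_of_subset (by simpa using hx), Finset.card_singleton]

/-- Of a cycle through all `n` points and its product with a transposition of adjacent points, one
has odd order: the orders are `n` and `n - 1`. -/
theorem exists_isSwap_odd_orderOf_closure_eq_top (α : Type*) [Finite α] [DecidableEq α]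
    [Nontrivial α] : ∃ a b : Perm α, a.IsSwap ∧ Odd (orderOf b) ∧ Subgroup.closure {a, b} = ⊤ := by
  have := Fintype.ofFinite α
  obtain ⟨σ, hσ, hsupp⟩ := exists_isCycle_support_eq_univ α
  obtain ⟨x, hx, -⟩ := id hσ
  have hswap : (swap x (σ x)).IsSwap := ⟨x, σ x, hx.symm, rfl⟩
  have hgen : Subgroup.closure {swap x (σ x), σ} = ⊤ := by
    rw [Set.pair_comm]
    exact Perm.closure_cycle_adjacent_swap hσ hsupp x
  rcases Nat.even_or_odd (Fintype.card α) with heven | hodd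
  · refine ⟨_, swap x (σ x) * σ, hswap, ?_, ?_⟩
    · rw [orderOf_swap_mul_of_isCycle hσ hx, hsupp, Finset.card_univ]
      exact Nat.Even.sub_odd Fintype.card_pos heven odd_one
    · rw [← top_le_iff, ← hgen, Subgroup.closure_le, Set.pair_subset_iff]
      have hmem : swap x (σ x) ∈ Subgroup.closure {swap x (σ x), swap x (σ x) * σ} :=
        Subgroup.subset_closure (Set.mem_insert _ _)
      exact ⟨hmem, (Subgroup.mul_mem_cancel_left _ hmem).1 (Subgroup.subset_closure (by simp))⟩
  · exact ⟨_, σ, hswap, by rwa [hσ.orderOf, hsupp], hgen⟩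

theorem hasSplitGenerators_perm (α : Type*) [Finite α] [Nontrivial α] :
    HasSplitGenerators (Perm α) 0 := by
  classical
  obtain ⟨a, b, ha, hb, hgen⟩ := exists_isSwap_odd_orderOf_closure_eq_top α
  exact ⟨a, b, Fin.elim0, sq_eq_one_of_isSwap ha, hb, by simpa [Set.range_eq_empty] using hgen⟩

theorem rank_perm_le_two (α : Type*) [Finite α] : Group.rank (Perm α) ≤ 2 := by
  rcases subsingleton_or_nontrivial α
  · exact (Group.rank_eq_zero _).trans_le zero_le_two
  · exact (hasSplitGenerators_perm α).rank_le_two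

theorem eq_top_of_conj_finRotate_mem {n : ℕ} {N : Subgroup (Perm (Fin (n + 2)))}
    (hswap : swap 0 1 ∈ N) (hconj : ∀ τ ∈ N, τ (Fin.last _) = Fin.last _ →
      finRotate (n + 2) * τ * (finRotate (n + 2))⁻¹ ∈ N) : N = ⊤ := by
  have hrot (i : Fin (n + 1)) : finRotate (n + 2) i.castSucc = i.succ := by
    rw [finRotate_apply, Fin.coeSucc_eq_succ]
  have hadj (i : Fin (n + 1)) : swap i.castSucc i.succ ∈ N := by
    induction i using Fin.induction with
    | zero => exact hswap
    | succ i ih =>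
      have hfix : swap i.castSucc.castSucc i.castSucc.succ (Fin.last _) = Fin.last _ :=
        swap_apply_of_ne_of_ne (Fin.castSucc_ne_last _).symm
          (by rw [Fin.succ_castSucc]; exact (Fin.castSucc_ne_last _).symm)
      have := hconj _ ih hfix
      rwa [← swap_apply_apply, hrot, Fin.succ_castSucc, hrot] at this
  have hle := (Submonoid.closure_le (S := N.toSubmonoid)).2 (Set.range_subset_iff.2 hadj)
  rw [Perm.mclosure_swap_castSucc_succ] at hle
  exact top_le_iff.1 fun σ _ => hle (Submonoid.mem_top σ)

theorem natCard_range_sign (k : ℕ) :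
    Nat.card (Perm.sign : Perm (Fin k) →* ℤˣ).range = 2 ^ gg k := by
  by_cases hk : 2 ≤ k
  · have : Nontrivial (Fin k) := Fin.nontrivial_iff_two_le.2 hk
    rw [MonoidHom.range_eq_top.2 (Perm.sign_surjective _), gg, if_pos hk]
    simp [Nat.card_eq_fintype_card]
  · have : Subsingleton (Fin k) := Fin.subsingleton_iff_le_one.2 (by omega)
    rw [gg, if_neg hk, pow_zero, Nat.card_eq_one_iff_unique]
    exact ⟨(MonoidHom.rangeRestrict_surjective _).subsingleton, inferInstance⟩

end SymmetricGroup

section Wreath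

/-- The wreath product of `K` by the full symmetric group of `ι`, which permutes the coordinates of
the base group `ι → K`. The group `S(X,P)` is a product of such groups, one for each block size. -/
abbrev Wreath (K ι : Type*) [Group K] : Type _ :=
  (ι → K) ⋊[(mulAutArrow : Perm ι →* MulAut (ι → K))] Perm ι

namespace Wreath

variable {K ι : Type*} [Group K]

instance [Finite K] [Finite ι] : Finite (Wreath K ι) :=
  Finite.of_equiv _ SemidirectProduct.equivProd.symm

/-- The top group of the wreath product. -/
def ofTop : Perm ι →* Wreath K ι := SemidirectProduct.inr

/-- The `k`-th factor of the base group of the wreath product. -/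
def single [DecidableEq ι] (k : ι) : K →* Wreath K ι :=
  SemidirectProduct.inl.comp (MonoidHom.mulSingle (fun _ => K) k)

/-- The diagonal of the base group of the wreath product; it commutes with the top group. -/
def diag : K →* Wreath K ι := SemidirectProduct.inl.comp (Pi.constMonoidHom ι K)

theorem mul_left_apply (v w : Wreath K ι) (k : ι) :
    (v * w).left (v.right k) = v.left (v.right k) * w.left k :=
  congrArg (fun j => v.left (v.right k) * w.left j) (v.right.symm_apply_apply k)

theorem ofTop_mul_inl (σ : Perm ι) (f : ι → K) :
    (ofTop σ * SemidirectProduct.inl f : Wreath K ι) =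
      SemidirectProduct.inl (f ∘ ⇑σ⁻¹) * ofTop σ := by
  rw [← mul_inv_eq_iff_eq_mul, ← map_inv]
  exact (SemidirectProduct.inl_aut σ f).symm

theorem commute_ofTop_diag (σ : Perm ι) (g : K) : Commute (ofTop σ) (diag g : Wreath K ι) :=
  ofTop_mul_inl σ (const ι g)

section Generators

variable [DecidableEq ι]

theorem ofTop_mul_single (σ : Perm ι) (k : ι) (g : K) :
    ofTop σ * single k g = single (σ k) g * ofTop σ := by
  have hcomp : (Pi.mulSingle k g ∘ ⇑σ⁻¹ : ι → K) = Pi.mulSingle (σ k) g :=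
    Pi.mulSingle_comp_equiv σ⁻¹ k g
  exact (ofTop_mul_inl σ (Pi.mulSingle k g)).trans (by rw [hcomp]; rfl)

theorem diag_mul_single (k : ι) (g h : K) :
    (diag g * single k h : Wreath K ι) = single k (g * h * g⁻¹) * diag g := by
  simp only [diag, single, MonoidHom.comp_apply, ← map_mul]
  congr 1
  ext j
  by_cases hj : j = k
  · subst hj; simp
  · simp [hj]

variable {H : Subgroup (Wreath K ι)}

theorem eq_top_of_single_mem [Finite ι] (htop : ∀ σ, ofTop σ ∈ H) (k : ι)
    (hsingle : ∀ g, single k g ∈ H) : H = ⊤ := by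
  have hbase (f : ι → K) : SemidirectProduct.inl f ∈ H := by
    refine Subgroup.pi_mem_of_mulSingle_mem (H := H.comap SemidirectProduct.inl) f fun j => ?_
    have hmem := H.mul_mem (htop (swap k j)) (hsingle (f j))
    rw [ofTop_mul_single, swap_apply_left] at hmem
    exact (H.mul_mem_cancel_right (htop _)).1 hmem
  refine top_le_iff.1 fun w _ => ?_
  rw [← SemidirectProduct.inl_left_mul_inr_right w]
  exact H.mul_mem (hbase _) (htop _)

theorem eq_top_of_ofTop_mem [Finite ι] {a b : K} (hgen : Subgroup.closure {a, b} = ⊤)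
    (hnormal : Subgroup.normalClosure {a} = ⊤) (htop : ∀ σ, ofTop σ ∈ H) (k : ι)
    (ha : single k a ∈ H) (hb : diag b ∈ H) : H = ⊤ := by
  have hnorm : (H.comap (single k)).Normal := by
    rw [← Subgroup.normalizer_eq_top_iff, ← top_le_iff, ← hgen, Subgroup.closure_le,
      Set.pair_subset_iff]
    refine ⟨Subgroup.le_normalizer ha, Subgroup.mem_normalizer_iff.2 fun g => ?_⟩
    rw [Subgroup.mem_comap, Subgroup.mem_comap, ← H.mul_mem_cancel_left hb, diag_mul_single,
      H.mul_mem_cancel_right hb]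
  refine eq_top_of_single_mem htop k fun g => ?_
  have hle : Subgroup.normalClosure {a} ≤ H.comap (single k) :=
    Subgroup.normalClosure_le_normal (Set.singleton_subset_iff.2 ha)
  exact hle (hnormal ▸ Subgroup.mem_top g)

end Generators

theorem hasSplitGenerators [Finite ι] [Nontrivial ι] {a b : K} (ha : a ^ 2 = 1)
    (hb : Odd (orderOf b)) (hgen : Subgroup.closure {a, b} = ⊤)
    (hnormal : Subgroup.normalClosure {a} = ⊤) : HasSplitGenerators (Wreath K ι) 1 := by
  classical
  obtain ⟨T, C, hT, hC, hTC⟩ := exists_isSwap_odd_orderOf_closure_eq_top ι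
  obtain ⟨k⟩ : Nonempty ι := inferInstance
  refine ⟨single k a, ofTop C, ![ofTop T * diag b], by rw [← map_pow, ha, map_one],
    odd_orderOf_map _ hC, ?_⟩
  set H := Subgroup.closure
    (insert (single k a) (insert (ofTop C) (Set.range ![ofTop T * diag b])))
  have hmem : ofTop T ∈ H ∧ diag b ∈ H :=
    mem_and_mem_of_mul_mem (commute_ofTop_diag T b)
      (by rw [← map_pow, sq_eq_one_of_isSwap hT, map_one]) (odd_orderOf_map _ hb)
      (Subgroup.subset_closure (by simp))
  have htop : ∀ σ, ofTop σ ∈ H := by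
    refine map_mem_of_closure_eq_top hTC ofTop ?_
    rintro σ (rfl | rfl)
    exacts [hmem.1, Subgroup.subset_closure (by simp)]
  exact eq_top_of_ofTop_mem hgen hnormal htop k (Subgroup.subset_closure (by simp)) hmem.2

/-- Conjugation by the second generator acts as the long cycle on the copies of permutations fixing
the last point, so the subgroup contains every adjacent transposition. -/
theorem closure_pair_eq_top {n : ℕ} {a b : K} (hb : Odd (orderOf b))
    (hgen : Subgroup.closure {a, b} = ⊤) (hnormal : Subgroup.normalClosure {a} = ⊤) :
    Subgroup.closure {ofTop (swap 0 1) * diag b,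
      ofTop (finRotate (n + 2)) * single (Fin.last (n + 1)) a} = ⊤ := by
  set x : Wreath K (Fin (n + 2)) := ofTop (swap 0 1) * diag b
  set y : Wreath K (Fin (n + 2)) := ofTop (finRotate (n + 2)) * single (Fin.last (n + 1)) a with hy
  set H := Subgroup.closure {x, y}
  have hyH : y ∈ H := Subgroup.subset_closure (by simp)
  have hmem : ofTop (swap 0 1) ∈ H ∧ diag b ∈ H :=
    mem_and_mem_of_mul_mem (commute_ofTop_diag _ b)
      (by rw [← map_pow, sq, swap_mul_self, map_one]) (odd_orderOf_map _ hb)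
      (Subgroup.subset_closure (by simp [x]))
  have hconj (τ : Perm (Fin (n + 2))) (hτ : τ (Fin.last _) = Fin.last _) :
      ofTop (finRotate (n + 2) * τ * (finRotate (n + 2))⁻¹) = y * ofTop τ * y⁻¹ := by
    have hcomm := ofTop_mul_single τ (Fin.last _) a
    rw [hτ] at hcomm
    rw [hy, mul_assoc (ofTop _) (single _ a), ← hcomm]
    simp only [map_mul, map_inv]
    group
  have htop : H.comap ofTop = ⊤ := eq_top_of_conj_finRotate_mem hmem.1 fun τ hτ hfix => by
    rw [Subgroup.mem_comap, hconj τ hfix]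
    exact H.mul_mem (H.mul_mem hyH hτ) (H.inv_mem hyH)
  have hofTop (σ : Perm (Fin (n + 2))) : ofTop σ ∈ H :=
    Subgroup.mem_comap.1 (htop ▸ Subgroup.mem_top σ)
  exact eq_top_of_ofTop_mem hgen hnormal hofTop (Fin.last _)
    ((H.mul_mem_cancel_left (hofTop _)).1 hyH) hmem.2

theorem ofTop_surjective [Subsingleton K] : Surjective (ofTop : Perm ι →* Wreath K ι) :=
  fun w => ⟨w.right, SemidirectProduct.ext (Subsingleton.elim _ _) rfl⟩

theorem diag_surjective [Subsingleton ι] : Surjective (diag : K →* Wreath K ι) := by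
  intro w
  obtain ⟨g, hg⟩ : ∃ g, const ι g = w.left := by
    rcases isEmpty_or_nonempty ι with _ | ⟨⟨k⟩⟩
    · exact ⟨1, Subsingleton.elim _ _⟩
    · exact ⟨w.left k, funext fun j => congrArg w.left (Subsingleton.elim k j)⟩
  exact ⟨g, SemidirectProduct.ext hg (Subsingleton.elim _ _)⟩

theorem exists_hasSplitGenerators (m s : ℕ) [Nontrivial (Wreath (Perm (Fin s)) (Fin m))] :
    ∃ k, k + 1 = gg m + gg s ∧ HasSplitGenerators (Wreath (Perm (Fin s)) (Fin m)) k := by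
  by_cases hm : 2 ≤ m <;> by_cases hs : 2 ≤ s
  · have := Fin.nontrivial_iff_two_le.2 hm
    have := Fin.nontrivial_iff_two_le.2 hs
    obtain ⟨a, b, ha, hb, hgen⟩ := exists_isSwap_odd_orderOf_closure_eq_top (Fin s)
    exact ⟨1, by simp [gg, hm, hs], hasSplitGenerators (sq_eq_one_of_isSwap ha) hb hgen
      (normalClosure_eq_top_of_isSwap ha)⟩
  · have := Fin.nontrivial_iff_two_le.2 hm
    have : Subsingleton (Fin s) := Fin.subsingleton_iff_le_one.2 (by omega)
    exact ⟨0, by simp [gg, hm, hs], (hasSplitGenerators_perm _).of_surjective ofTop_surjective⟩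
  · have : Subsingleton (Fin m) := Fin.subsingleton_iff_le_one.2 (by omega)
    have := Fin.nontrivial_iff_two_le.2 hs
    exact ⟨0, by simp [gg, hm, hs], (hasSplitGenerators_perm _).of_surjective diag_surjective⟩
  · have : Subsingleton (Fin m) := Fin.subsingleton_iff_le_one.2 (by omega)
    have : Subsingleton (Fin s) := Fin.subsingleton_iff_le_one.2 (by omega)
    exact absurd diag_surjective.subsingleton (not_subsingleton (Wreath (Perm (Fin s)) (Fin m)))

theorem rank_le_two (m s : ℕ) : Group.rank (Wreath (Perm (Fin s)) (Fin m)) ≤ 2 := by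
  rcases lt_or_ge s 2 with hs | hs
  · have : Subsingleton (Fin s) := Fin.subsingleton_iff_le_one.2 (by omega)
    exact (Group.rank_le_of_surjective _ ofTop_surjective).trans (rank_perm_le_two _)
  rcases lt_or_ge m 2 with hm | hm
  · have : Subsingleton (Fin m) := Fin.subsingleton_iff_le_one.2 (by omega)
    exact (Group.rank_le_of_surjective _ diag_surjective).trans (rank_perm_le_two _)
  obtain ⟨n, rfl⟩ := Nat.exists_eq_add_of_le' hm
  have := Fin.nontrivial_iff_two_le.2 hs
  obtain ⟨a, b, ha, hb, hgen⟩ := exists_isSwap_odd_orderOf_closure_eq_top (Fin s)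
  exact rank_le_two_of_closure_pair_eq_top
    (closure_pair_eq_top hb hgen (normalClosure_eq_top_of_isSwap ha))

theorem sq_eq_one_of_commute {α : Type*} (h : ∀ v w : Wreath (Perm α) ι, Commute v w)
    (w : Wreath (Perm α) ι) : w ^ 2 = 1 := by
  have hleft : w.left ^ 2 = 1 := funext fun k => perm_sq_eq_one_of_commute (fun σ τ =>
    congrFun (SemidirectProduct.inl_injective (h (diag σ) (diag τ))) k) (w.left k)
  have hright : w.right ^ 2 = 1 := perm_sq_eq_one_of_commute (fun σ τ =>
    SemidirectProduct.inr_injective (h (ofTop σ) (ofTop τ))) w.right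
  rw [← SemidirectProduct.inl_left_mul_inr_right w, (h _ _).mul_pow, ← map_pow, ← map_pow, hleft,
    hright, map_one, map_one, mul_one]

section Abelianization

variable [Fintype ι] {A B : Type*} [CommGroup A] [CommGroup B]

/-- The homomorphism to an abelian group given by a homomorphism `χ` on `K`, multiplied over the
coordinates, and a homomorphism `ψ` on the top group. -/
def toProd (χ : K →* A) (ψ : Perm ι →* B) : Wreath K ι →* A × B :=
  MonoidHom.prod
    { toFun := fun w => ∏ k, χ (w.left k)
      map_one' := by simp
      map_mul' := fun v w => by
        rw [← Equiv.prod_comp v.right fun k => χ ((v * w).left k),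
          ← Equiv.prod_comp v.right fun k => χ (v.left k), ← Finset.prod_mul_distrib]
        simp only [mul_left_apply, map_mul] }
    (ψ.comp SemidirectProduct.rightHom)

theorem toProd_surjective [Nonempty ι] {χ : K →* A} {ψ : Perm ι →* B} (hχ : Surjective χ)
    (hψ : Surjective ψ) : Surjective (toProd χ ψ) := by
  classical
  rintro ⟨a, b⟩
  obtain ⟨g, rfl⟩ := hχ a
  obtain ⟨σ, rfl⟩ := hψ b
  obtain ⟨k⟩ := ‹Nonempty ι›
  refine ⟨⟨Pi.mulSingle k g, σ⟩, Prod.ext ?_ rfl⟩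
  exact (Finset.prod_eq_single k (by simp +contextual) (by simp)).trans (by simp)

end Abelianization

end Wreath

theorem sum_gg_le_rank_pi_wreath {I : Type*} [Fintype I] {m : I → ℕ} (hm : ∀ i, m i ≠ 0)
    (s : I → ℕ) : ∑ i, (gg (m i) + gg (s i)) ≤
      Group.rank (∀ i, Wreath (Perm (Fin (s i))) (Fin (m i))) := by
  have (i : I) : NeZero (m i) := ⟨hm i⟩
  let sgn (k : ℕ) : Perm (Fin k) →* (Perm.sign : Perm (Fin k) →* ℤˣ).range :=
    Perm.sign.rangeRestrict
  have hsgn (k : ℕ) : Surjective (sgn k) := MonoidHom.rangeRestrict_surjective _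
  refine le_rank_of_surjective_of_sq_eq_one (A := ∀ i, (Perm.sign : Perm (Fin (s i)) →* ℤˣ).range ×
    (Perm.sign : Perm (Fin (m i)) →* ℤˣ).range)
    (φ := MonoidHom.piMap fun i => Wreath.toProd (sgn (s i)) (sgn (m i))) ?_ ?_ ?_
  · intro a
    ext i <;> simp [Int.units_sq]
  · simp only [Nat.card_pi, Nat.card_prod, natCard_range_sign, ← pow_add,
      Finset.prod_pow_eq_pow_sum, add_comm]
  · exact Function.Surjective.piMap fun i => Wreath.toProd_surjective (hsgn _) (hsgn _)

theorem rank_pi_wreath {I : Type*} [Fintype I] {m : I → ℕ} (hm : ∀ i, m i ≠ 0) (s : I → ℕ)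
    (hcard : 3 ≤ Nat.card (∀ i, Wreath (Perm (Fin (s i))) (Fin (m i)))) :
    Group.rank (∀ i, Wreath (Perm (Fin (s i))) (Fin (m i))) =
      max 2 (∑ i, (gg (m i) + gg (s i))) :=
  le_antisymm
    (HasSplitGenerators.rank_pi_le_max (fun i => Wreath.rank_le_two (m i) (s i))
      fun i _ => Wreath.exists_hasSplitGenerators (m i) (s i)) <| max_le
    (two_le_rank (pi_sq_eq_one_of_commute fun _ => Wreath.sq_eq_one_of_commute) hcard)
    (sum_gg_le_rank_pi_wreath hm s)

end Wreath

section Partition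

namespace Wreath

variable {ι α : Type*}

/-- The imprimitive action of the wreath product on `ι × α`: the top group permutes the blocks
`{k} × α`, the base group acts within the blocks. -/
def act : Wreath (Perm α) ι →* Perm (ι × α) where
  toFun w := Equiv.prodShear w.right fun k => w.left (w.right k)
  map_one' := rfl
  map_mul' v w := Equiv.ext fun x =>
    Prod.ext rfl (congrArg (fun σ : Perm α => σ x.2) (mul_left_apply v w (w.right x.1)))

theorem act_injective [Nonempty α] : Injective (act : Wreath (Perm α) ι →* Perm (ι × α)) := by
  intro v w h
  obtain ⟨y⟩ := ‹Nonempty α›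
  have hright : v.right = w.right := Equiv.ext fun k =>
    congrArg (fun g : Perm (ι × α) => (g (k, y)).1) h
  refine SemidirectProduct.ext (funext fun k => ?_) hright
  obtain ⟨j, rfl⟩ := v.right.surjective k
  refine Equiv.ext fun z => (congrArg (fun g : Perm (ι × α) => (g (j, z)).2) h).trans ?_
  rw [hright]
  rfl

theorem range_act [Nonempty α] :
    (act : Wreath (Perm α) ι →* Perm (ι × α)).range = SGrp (Setoid.ker Prod.fst) := by
  obtain ⟨y⟩ := ‹Nonempty α›
  refine le_antisymm ?_ ?_
  · rintro _ ⟨w, rfl⟩ u v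
    exact w.right.injective.eq_iff
  · intro g (hg : ∀ u v, (g u).1 = (g v).1 ↔ u.1 = v.1)
    have htop : Bijective fun k => (g (k, y)).1 := by
      refine ⟨fun j k h => (hg _ _).1 h, fun k => ?_⟩
      obtain ⟨u, hu⟩ := g.surjective (k, y)
      exact ⟨u.1, ((hg (u.1, y) u).2 rfl).trans (congrArg Prod.fst hu)⟩
    have hbase (k : ι) : Bijective fun z => (g (k, z)).2 := by
      refine ⟨fun z z' h => ?_, fun z => ?_⟩
      · exact congrArg Prod.snd (g.injective (Prod.ext ((hg (k, z) (k, z')).2 rfl) h))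
      · obtain ⟨u, hu⟩ := g.surjective ((g (k, y)).1, z)
        obtain rfl : u.1 = k := (hg u (k, y)).1 (by rw [hu])
        exact ⟨u.2, congrArg Prod.snd hu⟩
    let τ : Perm ι := Equiv.ofBijective _ htop
    refine ⟨⟨fun k => Equiv.ofBijective _ (hbase (τ.symm k)), τ⟩, Equiv.ext fun u => ?_⟩
    refine Prod.ext ((hg (u.1, y) u).2 rfl) ?_
    change (g (τ.symm (τ u.1), u.2)).2 = (g u).2
    rw [Equiv.symm_apply_apply]

end Wreath

namespace SGrp

variable {X : Type*}

theorem map_permCongrHom {Y : Type*} (e : X ≃ Y) (r : Setoid Y) :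
    (SGrp (r.comap e)).map (e.permCongrHom : Perm X →* Perm Y) = SGrp r := by
  rw [Subgroup.map_equiv_eq_comap_symm]
  ext g
  refine e.forall_congr fun {x} => e.forall_congr fun {y} => ?_
  change (r (e (e.symm (g (e x)))) (e (e.symm (g (e y)))) ↔ r (e x) (e y)) ↔ _
  simp only [apply_symm_apply]

theorem nonempty_mulEquiv_wreath {ι α : Type*} [Nonempty α] (e : X ≃ ι × α) :
    Nonempty (SGrp (Setoid.ker (Prod.fst ∘ e)) ≃* Wreath (Perm α) ι) := by
  have hmap := (map_permCongrHom e (Setoid.ker Prod.fst)).trans Wreath.range_act.symm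
  exact ⟨(e.permCongrHom.subgroupMap _).trans <| (MulEquiv.subgroupCongr hmap).trans
    (MonoidHom.ofInjective Wreath.act_injective).symm⟩

theorem nonempty_mulEquiv_pi {I : Type*} {r : Setoid X} {f : X → I}
    (hr : ∀ x y, r x y → f x = f y) (hf : ∀ g ∈ SGrp r, ∀ x, f (g x) = f x) :
    Nonempty (SGrp r ≃* ∀ i, SGrp (r.comap (Subtype.val : {x // f x = i} → X))) := by
  let restrict : SGrp r →* ∀ i, SGrp (r.comap (Subtype.val : {x // f x = i} → X)) :=
    { toFun := fun g i => ⟨g.1.subtypePerm fun x => by rw [hf g g.2], fun x y => g.2 x y⟩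
      map_one' := rfl
      map_mul' := fun _ _ => rfl }
  refine ⟨MulEquiv.ofBijective restrict ⟨fun g h hgh => ?_, fun h => ?_⟩⟩
  · refine Subtype.ext (Equiv.ext fun x => ?_)
    exact congrArg (fun u => ((u (f x)).1 ⟨x, rfl⟩).1) hgh
  · let g : Perm X := Equiv.ofFiberEquiv fun i => (h i).1
    have hg (i : I) (x : {x // f x = i}) : g x = (h i).1 x := by
      obtain ⟨x, rfl⟩ := x
      rfl
    refine ⟨⟨g, fun x y => ?_⟩, funext fun i => Subtype.ext (Equiv.ext fun x => ?_)⟩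
    · by_cases hxy : f x = f y
      · exact hg (f y) ⟨x, hxy⟩ ▸ hg (f y) ⟨y, rfl⟩ ▸ (h (f y)).2 ⟨x, hxy⟩ ⟨y, rfl⟩
      · have hfg (x : X) : f (g x) = f x := Equiv.ofFiberEquiv_map (fun i => (h i).1) x
        exact iff_of_false (fun hgxy => hxy (hfg x ▸ hfg y ▸ hr _ _ hgxy)) fun h' => hxy (hr _ _ h')
    · exact Subtype.ext (hg i x)

end SGrp

variable {X : Type*}

/-- The number of elements of a block, blocks being represented as points of the quotient. -/
noncomputable def blockSize (r : Setoid X) (b : Quotient r) : ℕ :=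
  Nat.card {x // Quotient.mk r x = b}

theorem natCard_blockSize_eq (r : Setoid X) (s : ℕ) :
    Nat.card {b : Quotient r // blockSize r b = s} = blockCount r s := by
  have hsize (b : Quotient r) :
      blockSize r b = s ↔ (Setoid.quotientEquivClasses r b : Set X).ncard = s := by
    induction b using Quotient.inductionOn with
    | h x =>
      rw [Setoid.quotientEquivClasses_mk_eq, blockSize, ← Nat.card_coe_set_eq]
      simp only [Quotient.eq, Set.coe_ofPred]
  exact Nat.card_congr ((Equiv.subtypeEquiv (Setoid.quotientEquivClasses r) hsize).trans
    (Equiv.subtypeSubtypeEquivSubtypeInter (· ∈ Setoid.classes r) (Set.ncard · = s)))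

theorem blockSize_mk_apply {r : Setoid X} {g : Perm X} (hg : g ∈ SGrp r) (x : X) :
    blockSize r (Quotient.mk r (g x)) = blockSize r (Quotient.mk r x) :=
  Nat.card_congr (g.subtypeEquiv fun y => by simp only [Quotient.eq, hg y x]) |>.symm

theorem exists_equiv_prod {ι α : Type*} (π : X → ι) (h : ∀ k, Nonempty ({x // π x = k} ≃ α)) :
    ∃ e : X ≃ ι × α, Prod.fst ∘ e = π :=
  ⟨(Equiv.sigmaFiberEquiv π).symm.trans <| (Equiv.sigmaCongrRight fun k => (h k).some).trans
    (Equiv.sigmaEquivProd ι α), rfl⟩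

section Finite

variable [Finite X] (r : Setoid X)

theorem blockSize_ne_zero (b : Quotient r) : blockSize r b ≠ 0 := by
  obtain ⟨x, hx⟩ := b.exists_rep
  have : Nonempty {x // Quotient.mk r x = b} := ⟨x, hx⟩
  exact Nat.card_pos.ne'

/-- The finite set of sizes of blocks. -/
noncomputable def blockSizes : Finset ℕ := (Set.finite_range (blockSize r)).toFinset

theorem mem_blockSizes {s : ℕ} : s ∈ blockSizes r ↔ blockCount r s ≠ 0 := by
  rw [blockSizes, Set.Finite.mem_toFinset, ← natCard_blockSize_eq, Nat.card_ne_zero]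
  exact ⟨fun ⟨b, hb⟩ => ⟨⟨b, hb⟩, inferInstance⟩, fun ⟨⟨b, hb⟩, _⟩ => ⟨b, hb⟩⟩

theorem ne_zero_of_mem_blockSizes {s : ℕ} (hs : s ∈ blockSizes r) : s ≠ 0 := by
  obtain ⟨b, rfl⟩ := (Set.Finite.mem_toFinset _).1 hs
  exact blockSize_ne_zero r b

theorem exists_equiv_fin_prod_fin {s : ℕ} {p : X → Prop}
    (hp : ∀ x, p x ↔ blockSize r (Quotient.mk r x) = s) :
    ∃ e : {x // p x} ≃ Fin (blockCount r s) × Fin s,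
      r.comap Subtype.val = Setoid.ker (Prod.fst ∘ e) := by
  let index : {b // blockSize r b = s} ≃ Fin (blockCount r s) :=
    Finite.equivFinOfCardEq (natCard_blockSize_eq r s)
  let π : {x // p x} → Fin (blockCount r s) :=
    fun x => index ⟨Quotient.mk r x, (hp x).1 x.2⟩
  have hπ (x y : {x // p x}) : r x y ↔ π x = π y :=
    (index.injective.eq_iff.trans (Subtype.ext_iff.trans Quotient.eq)).symm
  have hfiber (k : Fin (blockCount r s)) : Nonempty ({x // π x = k} ≃ Fin s) := by
    obtain ⟨⟨b, hb⟩, rfl⟩ := index.surjective k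
    have toBlock : {x // π x = index ⟨b, hb⟩} ≃ {x // Quotient.mk r x = b} :=
      (Equiv.subtypeEquivRight fun x => index.injective.eq_iff.trans Subtype.ext_iff).trans
        (Equiv.subtypeSubtypeEquivSubtype fun {x} (hx : Quotient.mk r x = b) =>
          (hp x).2 (hx ▸ hb))
    exact ⟨toBlock.trans (Finite.equivFinOfCardEq hb)⟩
  obtain ⟨e, he⟩ := exists_equiv_prod π hfiber
  exact ⟨e, he ▸ Setoid.ext hπ⟩

theorem sum_blockSizes {J : Type*} [Fintype J] {size : J → ℕ} (hsize : Injective size)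
    (hcover : ∀ s ∈ blockSizes r, s ∈ Set.range size)
    (hoccurs : ∀ j, 2 ≤ size j → blockCount r (size j) ≠ 0) :
    ∑ s ∈ blockSizes r, (gg (blockCount r s) + gg s) =
      ∑ j, (gg (blockCount r (size j)) + gg (size j)) := by
  rw [← Finset.sum_image (f := fun s => gg (blockCount r s) + gg s) hsize.injOn]
  refine Finset.sum_subset (fun s hs => by simpa using hcover s hs) fun s hs hs' => ?_
  obtain ⟨j, -, rfl⟩ := Finset.mem_image.1 hs
  have hcount : blockCount r (size j) = 0 := not_not.1 (mt (mem_blockSizes r).2 hs')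
  have hj : ¬ 2 ≤ size j := fun h => hoccurs j h hcount
  simp [gg, hcount, hj]

theorem nonempty_mulEquiv_pi_wreath : Nonempty (SGrp r ≃*
    ∀ s : blockSizes r, Wreath (Perm (Fin s)) (Fin (blockCount r s))) := by
  let f : X → blockSizes r :=
    fun x => ⟨blockSize r (Quotient.mk r x), (Set.Finite.mem_toFinset _).2 ⟨_, rfl⟩⟩
  have hwreath (s : blockSizes r) :
      Nonempty (SGrp (r.comap (Subtype.val : {x // f x = s} → X)) ≃*
        Wreath (Perm (Fin s)) (Fin (blockCount r s))) := by
    have : NeZero (s : ℕ) := ⟨ne_zero_of_mem_blockSizes r s.2⟩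
    obtain ⟨e, he⟩ := exists_equiv_fin_prod_fin r fun x => (Subtype.ext_iff : f x = s ↔ _)
    exact he ▸ SGrp.nonempty_mulEquiv_wreath e
  obtain ⟨e⟩ := SGrp.nonempty_mulEquiv_pi (r := r) (f := f)
    (fun x y hxy => Subtype.ext (congrArg (blockSize r) (Quotient.sound hxy)))
    fun g hg x => Subtype.ext (blockSize_mk_apply hg x)
  exact ⟨e.trans (MulEquiv.piCongrRight fun s => (hwreath s).some)⟩

theorem grank_SGrp (hcard : 3 ≤ Nat.card (SGrp r)) :
    grank (SGrp r) = max 2 (∑ s ∈ blockSizes r, (gg (blockCount r s) + gg s)) := by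
  obtain ⟨e⟩ := nonempty_mulEquiv_pi_wreath r
  rw [Nat.card_congr e.toEquiv] at hcard
  rw [grank_eq_rank, Group.rank_congr e, rank_pi_wreath (fun s => (mem_blockSizes r).1 s.2) _ hcard,
    Finset.sum_coe_sort (blockSizes r) fun s => gg (blockCount r s) + gg s]

end Finite

end Partition

/-- If `|S(X,P)| ≥ 3`, then the rank of the group `S(X,P)`
equals `max{2, 2p+q+g(t)}`. -/
theorem rank_SXP {X : Type*} [Fintype X] [Nonempty X] (r : Setoid X)
    (p q t : ℕ) (n m : Fin p → ℕ) (l : Fin q → ℕ)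
    (hn2 : ∀ i, 2 ≤ n i) (hm2 : ∀ i, 2 ≤ m i) (hl2 : ∀ j, 2 ≤ l j)
    (hninj : Function.Injective n) (hlinj : Function.Injective l)
    (hnl : ∀ i j, n i ≠ l j)
    (hcn : ∀ i, blockCount r (n i) = m i)
    (hcl : ∀ j, blockCount r (l j) = 1)
    (hct : blockCount r 1 = t)
    (hcover : ∀ s, 2 ≤ s → blockCount r s ≠ 0 → (∃ i, s = n i) ∨ (∃ j, s = l j))
    (hS3 : 3 ≤ Nat.card (SGrp r)) :
    grank (SGrp r) = max 2 (2 * p + q + gg t) := by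
  have hgg {k : ℕ} (hk : 2 ≤ k) : gg k = 1 := if_pos hk
  let size : Unit ⊕ Fin p ⊕ Fin q → ℕ := Sum.elim (fun _ => 1) (Sum.elim n l)
  have hsize : Injective size :=
    (injective_of_subsingleton _).sumElim (hninj.sumElim hlinj hnl) (by
      rintro _ (i | j)
      exacts [(one_lt_two.trans_le (hn2 i)).ne, (one_lt_two.trans_le (hl2 j)).ne])
  have hcover_size : ∀ s ∈ blockSizes r, s ∈ Set.range size := by
    intro s hs
    rcases (Nat.one_le_iff_ne_zero.2 (ne_zero_of_mem_blockSizes r hs)).eq_or_lt with rfl | hs2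
    · exact ⟨Sum.inl (), rfl⟩
    · rcases hcover s hs2 ((mem_blockSizes r).1 hs) with ⟨i, rfl⟩ | ⟨j, rfl⟩
      exacts [⟨Sum.inr (Sum.inl i), rfl⟩, ⟨Sum.inr (Sum.inr j), rfl⟩]
  have hoccurs : ∀ x, 2 ≤ size x → blockCount r (size x) ≠ 0 := by
    rintro (_ | i | j) hx
    · exact absurd hx (Nat.not_succ_le_self 1)
    · exact (hcn i).trans_ne (by have := hm2 i; omega)
    · exact (hcl j).trans_ne one_ne_zero
  rw [grank_SGrp r hS3, sum_blockSizes r hsize hcover_size hoccurs]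
  simp only [size, Fintype.sum_sum_type, Sum.elim_inl, Sum.elim_inr, hcn, hcl, hct, hgg (hn2 _),
    hgg (hm2 _), hgg (hl2 _), show gg 1 = 0 from rfl, Finset.sum_const, Finset.card_univ,
    Fintype.card_unit, Fintype.card_fin, smul_eq_mul]
  congr 1
  ring
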